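/- arXiv:2004.05829 — 3 statements merged into one kernel-verified Lean document; each statement's English description precedes it below -/
import Mathlib

section
/- Let S be an n × n real symmetric matrix with all diagonal entries 0 and all off-diagonal entries equal to 1 or -1 (a Seidel matrix). If n is not congruent to 1 modulo 4, then S is nonsingular, i.e., det S ≠ 0. -/
open Matrix

lemma sym_sum_dvd_four (n : ℕ) (g : Fin n → Fin n → ℤ) (hs : ∀ i j, g i j = g j i)
    (hd : ∀ i, g i i = 0) (he : ∀ i j, (2 : ℤ) ∣ g i j) : (4 : ℤ) ∣ ∑ i, ∑ j, g i j := by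
  have h1 : ∑ i, ∑ j, g i j = (∑ i, ∑ j, if i < j then g i j else 0)
      + ∑ i, ∑ j, if j < i then g i j else 0 := by
    rw [← Finset.sum_add_distrib]
    refine Finset.sum_congr rfl fun i _ => ?_
    rw [← Finset.sum_add_distrib]
    refine Finset.sum_congr rfl fun j _ => ?_
    rcases lt_trichotomy i j with h | h | h
    · simp [h, h.le, not_lt.mpr h.le]
    · subst h; simp [hd]
    · simp [h, h.le, not_lt.mpr h.le]
  have h2 : (∑ i, ∑ j, if j < i then g i j else 0) = ∑ i, ∑ j, if i < j then g i j else 0 := by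
    rw [Finset.sum_comm]
    simp only [hs]
  have h3 : (2 : ℤ) ∣ ∑ i, ∑ j, if i < j then g i j else 0 := by
    refine Finset.dvd_sum fun i _ => Finset.dvd_sum fun j _ => ?_
    split_ifs
    · exact he i j
    · exact dvd_zero _
  rw [h1, h2]
  omega

lemma seidel_int (n : ℕ) (T : Matrix (Fin n) (Fin n) ℤ)
    (hsymm : ∀ i j, T i j = T j i) (hdiag : ∀ i, T i i = 0)
    (hoff : ∀ i j, i ≠ j → T i j % 2 = 1) (hn : n % 4 ≠ 1) : T.det ≠ 0 := by
  intro hdet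
  obtain ⟨v, hv0, hv⟩ := Matrix.exists_mulVec_eq_zero_iff.mpr hdet
  obtain ⟨i0, hi0⟩ := Function.ne_iff.mp hv0
  obtain ⟨x, hx, hg⟩ := Finset.extract_gcd v (s := Finset.univ) ⟨i0, Finset.mem_univ _⟩
  have hd0 : Finset.univ.gcd v ≠ 0 := by
    intro h
    exact hi0 (by simpa [h] using hx i0 (Finset.mem_univ _))
  have hTx : ∀ i, ∑ j, T i j * x j = 0 := by
    intro i
    have h := congrFun hv i
    simp only [Matrix.mulVec, dotProduct, Pi.zero_apply] at h
    apply (mul_eq_zero.mp _).resolve_left hd0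
    rw [← h, Finset.mul_sum]
    refine Finset.sum_congr rfl fun j _ => ?_
    rw [hx j (Finset.mem_univ _)]; ring
  have hpar : ∀ i, (2 : ℤ) ∣ (∑ j, x j) - x i := by
    intro i
    have h : (∑ j, x j) - x i = ∑ j, (x j - (if i = j then x j else 0) - T i j * x j) := by
      rw [Finset.sum_sub_distrib, Finset.sum_sub_distrib, hTx i]; simp
    rw [h]
    refine Finset.dvd_sum fun j _ => ?_
    by_cases hij : i = j
    · subst hij; simp [hdiag]
    · have := hoff i j hij
      have h2 : (2 : ℤ) ∣ 1 - T i j := by omega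
      have := h2.mul_right (x j)
      simpa [hij, sub_mul] using this
  have hodd : ∀ i, x i % 2 = 1 := by
    by_contra hcon
    push Not at hcon
    obtain ⟨i, hi⟩ := hcon
    have : (2 : ℤ) ∣ Finset.univ.gcd x := by
      refine Finset.dvd_gcd fun j _ => ?_
      have := hpar i
      have := hpar j
      omega
    rw [hg] at this
    omega
  have hnodd : (2 : ℤ) ∣ (∑ j, x j) - n := by
    have h : (∑ j, x j) - n = ∑ j, (x j - 1) := by simp
    rw [h]
    refine Finset.dvd_sum fun j _ => ?_
    have := hodd j
    omega
  have h4 := sym_sum_dvd_four n (fun i j => x i * (T i j * x j) - (1 - if i = j then 1 else 0))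
    (by intro i j; simp only [hsymm i j, eq_comm (a := i)]; ring)
    (by intro i; simp [hdiag])
    (by
      intro i j
      by_cases hij : i = j
      · subst hij; simp [hdiag]
      · have h := hoff i j hij
        have : (x i * (T i j * x j)) % 2 = 1 := by
          simp [Int.mul_emod, h, hodd]
        simp only [hij, if_false]
        omega)
  simp only [Finset.sum_sub_distrib, ← Finset.mul_sum, hTx] at h4
  simp at h4
  have h1 := hpar i0
  have h2 := hodd i0
  have h3 : n % 4 = 3 := by omega
  obtain ⟨k, rfl⟩ : ∃ k, n = 4 * k + 3 := ⟨n / 4, by omega⟩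
  push_cast at h4
  ring_nf at h4
  omega

/-- A Seidel matrix of order `n` (real symmetric, zero diagonal, off-diagonal entries
`±1`) is nonsingular whenever `n` is not congruent to `1` modulo `4`. -/
theorem seidel_matrix_nonsingular
    (n : ℕ) (S : Matrix (Fin n) (Fin n) ℝ)
    (hsymm : S.IsSymm)
    (hdiag : ∀ i, S i i = 0)
    (hoff : ∀ i j, i ≠ j → S i j = 1 ∨ S i j = -1)
    (hn : n % 4 ≠ 1) :
    S.det ≠ 0 := by
  have hex : ∀ i j, ∃ t : ℤ, (t : ℝ) = S i j := by
    intro i j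
    by_cases h : i = j
    · subst h; exact ⟨0, by simp [hdiag]⟩
    · rcases hoff i j h with h | h
      · exact ⟨1, by simp [h]⟩
      · exact ⟨-1, by simp [h]⟩
  choose T hT using hex
  have hS : S = (Int.castRingHom ℝ).mapMatrix (Matrix.of T) := by
    ext i j; simp [hT]
  rw [hS, ← RingHom.map_det]
  have := seidel_int n (Matrix.of T)
    (by intro i j; have := hsymm.apply i j; rw [← hT, ← hT] at this; exact_mod_cast this.symm)
    (by intro i; have := hdiag i; rw [← hT] at this; exact_mod_cast this)
    (by
      intro i j hij
      have h := hoff i j hij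
      rw [← hT] at h
      have h' : T i j = 1 ∨ T i j = -1 := by exact_mod_cast h
      simp only [Matrix.of_apply]
      omega) hn
  simpa using this
end

section
/- Let S be an n × n integer symmetric matrix with all diagonal entries 0 and all off-diagonal entries equal to 1 or -1 (a Seidel matrix). Then det S ≡ 1 - n (mod 4). -/
open Matrix

lemma seidel_aux_inv {n : ℕ} (S : Matrix (Fin n) (Fin n) ℤ) (hsymm : S.IsSymm)
    (σ : Equiv.Perm (Fin n)) : ∏ i, S (σ⁻¹ i) i = ∏ i, S (σ i) i := by
  rw [← Equiv.prod_comp σ (fun i => S (σ⁻¹ i) i)]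
  refine Finset.prod_congr rfl fun i _ => ?_
  have e : σ⁻¹ (σ i) = i := by simp
  simp only [e]
  exact hsymm.apply _ _

lemma seidel_aux_one {n : ℕ} (S : Matrix (Fin n) (Fin n) ℤ) (hsymm : S.IsSymm)
    (hoff : ∀ i j, i ≠ j → S i j = 1 ∨ S i j = -1)
    (σ : Equiv.Perm (Fin n)) (h : ∀ i, σ (σ i) = i) (hf : ∀ i, σ i ≠ i) :
    ∏ i, S (σ i) i = 1 := by
  refine Finset.prod_involution (fun i _ => σ i) ?_ ?_ ?_ ?_
  · intro i _
    rw [h, hsymm.apply]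
    rcases hoff _ _ (hf i).symm with e | e <;> rw [e] <;> norm_num
  · intro i _ _; exact hf i
  · intro i _; exact Finset.mem_univ _
  · intro i _; exact h i

lemma seidel_aux_compare {n : ℕ} (S B : Matrix (Fin n) (Fin n) ℤ)
    (hS : S.IsSymm) (hSd : ∀ i, S i i = 0) (hSo : ∀ i j, i ≠ j → S i j = 1 ∨ S i j = -1)
    (hB : B.IsSymm) (hBd : ∀ i, B i i = 0) (hBo : ∀ i j, i ≠ j → B i j = 1 ∨ B i j = -1) :
    (((S.det - B.det : ℤ)) : ZMod 4) = 0 := by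
  rw [Matrix.det_apply', Matrix.det_apply', ← Finset.sum_sub_distrib, Int.cast_sum]
  refine Finset.sum_involution (fun σ _ => σ⁻¹) ?_ ?_ ?_ ?_
  · intro σ _
    rw [seidel_aux_inv S hS, seidel_aux_inv B hB, Equiv.Perm.sign_inv]
    have h2 : (2 : ℤ) ∣ ∏ i, S (σ i) i - ∏ i, B (σ i) i := by
      apply Int.ModEq.dvd
      refine Int.ModEq.prod fun i _ => ?_
      by_cases e : σ i = i
      · rw [e, hSd, hBd]
      · rcases hSo _ _ e with h | h <;> rcases hBo _ _ e with h' | h' <;> rw [h, h'] <;> decide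
    obtain ⟨c, hc⟩ := h2
    rw [← mul_sub, hc, ← Int.cast_add]
    refine (ZMod.intCast_zmod_eq_zero_iff_dvd _ 4).2 ⟨(Equiv.Perm.sign σ : ℤ) * c, ?_⟩
    push_cast; ring
  · intro σ _ hne he
    apply hne
    have h : ∀ i, σ (σ i) = i := fun i => by
      nth_rewrite 1 [← he]; simp
    by_cases hf : ∀ i, σ i ≠ i
    · rw [seidel_aux_one S hS hSo σ h hf, seidel_aux_one B hB hBo σ h hf]; simp
    · push Not at hf
      obtain ⟨i, hi⟩ := hf
      rw [Finset.prod_eq_zero (Finset.mem_univ i) (by rw [hi, hSd]),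
        Finset.prod_eq_zero (Finset.mem_univ i) (by rw [hi, hBd])]; simp
  · intro σ _; exact Finset.mem_univ _
  · intro σ _; exact inv_inv σ

lemma seidel_aux_det (n : ℕ) :
    (Matrix.of fun i j : Fin n => if i = j then (0 : ℤ) else 1).det = (-1) ^ n * (1 - n) := by
  have : (Matrix.of fun i j : Fin n => if i = j then (0 : ℤ) else 1)
      = -(1 + replicateCol Unit (fun _ : Fin n => (-1 : ℤ)) * replicateRow Unit (fun _ : Fin n => (1 : ℤ))) := by
    ext i j
    by_cases h : i = j <;> simp [h, Matrix.mul_apply, Matrix.one_apply]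
  rw [this, Matrix.det_neg, Matrix.det_one_add_replicateCol_mul_replicateRow]
  simp [dotProduct, sub_eq_add_neg]

/-- The determinant of an integer Seidel matrix of order `n` (symmetric, zero diagonal,
off-diagonal entries `±1`) is congruent to `1 - n` modulo `4`. -/
theorem seidel_matrix_det_mod_four
    (n : ℕ) (S : Matrix (Fin n) (Fin n) ℤ)
    (hsymm : S.IsSymm)
    (hdiag : ∀ i, S i i = 0)
    (hoff : ∀ i j, i ≠ j → S i j = 1 ∨ S i j = -1) :
    S.det ≡ 1 - (n : ℤ) [ZMOD 4] := by
  have h := seidel_aux_compare S (Matrix.of fun i j : Fin n => if i = j then (0 : ℤ) else 1)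
    hsymm hdiag hoff (by ext i j; simp [eq_comm]) (by simp) (by intro i j h; simp [h])
  rw [seidel_aux_det, ZMod.intCast_zmod_eq_zero_iff_dvd] at h
  rw [Int.modEq_iff_dvd]
  rcases Nat.even_or_odd n with e | e
  · rw [e.neg_one_pow] at h
    push_cast at h
    omega
  · rw [e.neg_one_pow] at h
    obtain ⟨k, rfl⟩ := e
    push_cast at h ⊢
    omega
end

section
/- Let n ≥ 2 and let C be an n × n real symmetric conference matrix (diagonal entries 0, off-diagonal entries ±1, C Cᵀ = (n-1)·I). Write C in block form as C = [[0, vᵀ], [v, S]], where v ∈ ℝ^{n-1} is the first column of C with its first entry removed and S is the principal submatrix of C obtained by deleting the first row and first column. Then S v = 0 and S² x = (n-1) x for every x ∈ ℝ^{n-1} orthogonal to v; consequently the eigenvalues of S are 0 (with multiplicity 1) and ±√(n-1) (each with multiplicity (n-2)/2), so the spectrum of S is symmetric. -/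
open Matrix

/-- The multiplicity of `μ` as an eigenvalue of the matrix `S`:
the dimension of the kernel of `S - μ • 1`. -/
noncomputable def eigMult {n : ℕ} (S : Matrix (Fin n) (Fin n) ℝ) (μ : ℝ) : ℕ :=
  Module.finrank ℝ (LinearMap.ker (Matrix.toLin' (S - μ • (1 : Matrix (Fin n) (Fin n) ℝ))))

lemma eigMult_of_proj {n : ℕ} (S P : Matrix (Fin n) (Fin n) ℝ) (μ : ℝ)
    (h1 : S * P = μ • P) (h2 : ∀ x, S *ᵥ x = μ • x → P *ᵥ x = x) :
    (eigMult S μ : ℝ) = P.trace := by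
  have hp : LinearMap.IsProj
      (LinearMap.ker (Matrix.toLin' (S - μ • (1 : Matrix (Fin n) (Fin n) ℝ))))
      (Matrix.toLin' P) := by
    constructor
    · intro x
      rw [LinearMap.mem_ker, Matrix.toLin'_apply, Matrix.toLin'_apply, Matrix.mulVec_mulVec,
        Matrix.sub_mul, h1]
      simp
    · intro x hx
      rw [LinearMap.mem_ker, Matrix.toLin'_apply, Matrix.sub_mulVec, Matrix.smul_mulVec,
        Matrix.one_mulVec, sub_eq_zero] at hx
      rw [Matrix.toLin'_apply]
      exact h2 x hx
  have h := hp.trace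
  rw [Matrix.trace_toLin'_eq] at h
  rw [h]
  rfl

/-- Let `C` be a symmetric conference matrix of order `n + 1 ≥ 2` (so `C * Cᵀ = n • 1`).
Write `C` in block form `C = [[0, vᵀ], [v, S]]`, where `v` is the first column of `C`
with its first entry removed and `S` is the principal submatrix obtained by deleting the
first row and column. Then `S v = 0`, `S² x = n • x` for every `x ⊥ v`, the eigenvalues
of `S` are `0` (multiplicity `1`) and `±√n` (each with multiplicity `(n-1)/2`,
i.e. `((n+1)-2)/2`), and hence the spectrum of `S` is symmetric. -/
theorem principal_submatrix_of_conference_matrix_symmetric_spectrum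
    (n : ℕ) (hn : 1 ≤ n) (C : Matrix (Fin (n + 1)) (Fin (n + 1)) ℝ)
    (hsymm : C.IsSymm)
    (hdiag : ∀ i, C i i = 0)
    (hoff : ∀ i j, i ≠ j → C i j = 1 ∨ C i j = -1)
    (hconf : C * Cᵀ = (n : ℝ) • (1 : Matrix (Fin (n + 1)) (Fin (n + 1)) ℝ))
    (v : Fin n → ℝ) (hv : ∀ i, v i = C i.succ 0)
    (S : Matrix (Fin n) (Fin n) ℝ) (hS : S = C.submatrix Fin.succ Fin.succ) :
    S.mulVec v = 0 ∧
    (∀ x : Fin n → ℝ, x ⬝ᵥ v = 0 → S.mulVec (S.mulVec x) = (n : ℝ) • x) ∧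
    eigMult S 0 = 1 ∧
    eigMult S (Real.sqrt (n : ℝ)) = (n - 1) / 2 ∧
    eigMult S (-Real.sqrt (n : ℝ)) = (n - 1) / 2 ∧
    (∀ μ : ℝ, eigMult S μ = eigMult S (-μ)) := by
  have hC : ∀ i j, ∑ k, C i k * C j k = if i = j then (n : ℝ) else 0 := by
    intro i j
    have := congrFun (congrFun hconf i) j
    simpa [Matrix.mul_apply, Matrix.one_apply] using this
  have hSs : Sᵀ = S := by
    subst hS
    ext i j
    exact hsymm.apply _ _
  have hvr : ∀ i, C 0 (Fin.succ i) = v i := fun i => by rw [hv]; exact hsymm.apply _ _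
  have hn0 : (n : ℝ) ≠ 0 := by positivity
  have hSv : S *ᵥ v = 0 := by
    ext i
    have := hC i.succ 0
    rw [Fin.sum_univ_succ] at this
    simp only [hdiag, hvr, Fin.succ_ne_zero, if_false, mul_zero, zero_add] at this
    simpa [hS, Matrix.mulVec, dotProduct] using this
  have hvv : v ⬝ᵥ v = n := by
    have := hC 0 0
    rw [Fin.sum_univ_succ] at this
    simpa [hdiag, hvr, dotProduct] using this
  have hSS : S * S = (n : ℝ) • (1 : Matrix (Fin n) (Fin n) ℝ) - Matrix.vecMulVec v v := by
    nth_rw 2 [← hSs]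
    ext i j
    have := hC i.succ j.succ
    rw [Fin.sum_univ_succ, ← hv, ← hv] at this
    simp only [Fin.succ_inj] at this
    simp only [Matrix.mul_apply, Matrix.transpose_apply, hS, Matrix.submatrix_apply,
      Matrix.sub_apply, Matrix.smul_apply, Matrix.one_apply, Matrix.vecMulVec_apply, smul_eq_mul,
      mul_ite, mul_one, mul_zero]
    linarith
  have hSV : S * Matrix.vecMulVec v v = 0 := by
    rw [Matrix.mul_vecMulVec, hSv]
    ext i j
    simp [Matrix.vecMulVec_apply]
  have hSSS : S * (S * S) = (n : ℝ) • S := by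
    rw [hSS, Matrix.mul_sub, hSV]
    simp
  have hSSx : ∀ x, S *ᵥ (S *ᵥ x) = (n : ℝ) • x - (v ⬝ᵥ x) • v := by
    intro x
    rw [Matrix.mulVec_mulVec, hSS, Matrix.sub_mulVec, Matrix.smul_mulVec, Matrix.one_mulVec,
      Matrix.vecMulVec_mulVec]
    simp
  have htrS : S.trace = 0 := by
    simp [Matrix.trace, hS, hdiag]
  have htrV : (Matrix.vecMulVec v v).trace = n := by
    rw [Matrix.trace_vecMulVec, hvv]
  have htrSS : (S * S).trace = (n : ℝ) * n - n := by
    rw [hSS, Matrix.trace_sub, Matrix.trace_smul, htrV]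
    simp
  have h0 : eigMult S 0 = 1 := by
    have := eigMult_of_proj S ((n : ℝ)⁻¹ • Matrix.vecMulVec v v) 0
      (by rw [Matrix.mul_smul, hSV]; simp) (by
        intro x hx
        have h := hSSx x
        rw [hx, zero_smul, Matrix.mulVec_zero] at h
        rw [Matrix.smul_mulVec, Matrix.vecMulVec_mulVec, inv_smul_eq_iff₀ hn0]
        rw [eq_comm, sub_eq_zero] at h
        rw [h]
        simp)
    rw [Matrix.trace_smul, htrV, smul_eq_mul, inv_mul_cancel₀ hn0] at this
    exact_mod_cast this
  have ht : ∀ t : ℝ, t * t = n → eigMult S t = (n - 1) / 2 := by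
    intro t ht
    have := eigMult_of_proj S ((2 * (n : ℝ))⁻¹ • (S * S + t • S)) t
      (by
        rw [Matrix.mul_smul, Matrix.mul_add, hSSS, Matrix.mul_smul, smul_comm t, smul_add t,
          smul_smul t t, ht, add_comm]) (by
        intro x hx
        rw [Matrix.smul_mulVec, Matrix.add_mulVec, ← Matrix.mulVec_mulVec, Matrix.smul_mulVec, hx,
          Matrix.mulVec_smul, hx, smul_smul, ht, inv_smul_eq_iff₀ (by positivity), two_mul,
          add_smul])
    rw [Matrix.trace_smul, Matrix.trace_add, htrSS, Matrix.trace_smul, htrS] at this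
    have h2 : (2 * eigMult S t + 1 : ℝ) = n := by
      rw [this]
      simp only [smul_eq_mul]
      field_simp
      ring
    have h3 : 2 * eigMult S t + 1 = n := by exact_mod_cast h2
    omega
  have hother : ∀ t : ℝ, t ≠ 0 → t * t ≠ n → eigMult S t = 0 := by
    intro t h0 h1
    have := eigMult_of_proj S 0 t (by simp) (by
      intro x hx
      have h : (S * (S * S)) *ᵥ x = (n : ℝ) • (S *ᵥ x) := by rw [hSSS, Matrix.smul_mulVec]
      rw [← Matrix.mulVec_mulVec, ← Matrix.mulVec_mulVec, hx, Matrix.mulVec_smul, hx,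
        Matrix.mulVec_smul, Matrix.mulVec_smul, hx, smul_smul, smul_smul, smul_smul,
        ← sub_eq_zero, ← sub_smul, smul_eq_zero] at h
      rcases h with h | h
      · exfalso
        have : t * (t * t - n) = 0 := by linarith
        rcases mul_eq_zero.1 this with h | h
        · exact h0 h
        · exact h1 (sub_eq_zero.1 h)
      · simp [h])
    simpa using this
  have hs : Real.sqrt (n : ℝ) * Real.sqrt (n : ℝ) = n := Real.mul_self_sqrt (by positivity)
  refine ⟨hSv, ?_, h0, ht _ hs, ht _ (by rw [neg_mul_neg, hs]), ?_⟩
  · intro x hx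
    rw [hSSx, dotProduct_comm, hx]
    simp
  · intro μ
    by_cases hμ : μ = 0
    · simp [hμ]
    by_cases h : μ * μ = n
    · rw [ht μ h, ht (-μ) (by rw [neg_mul_neg, h])]
    · rw [hother μ hμ h, hother (-μ) (neg_ne_zero.2 hμ) (by rwa [neg_mul_neg])]
end
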